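/- For every positive integer r, there exists a strongly connected bridgeless mixed multigraph of radius r whose oriented radius is exactly r² + 3r − 1; that is, it has a strongly connected orientation of radius r² + 3r − 1, and every strongly connected orientation of it has radius at least r² + 3r − 1. -/

import Mathlib

/-- A mixed multigraph: a multigraph whose edges are each either directed
(traversable only from `src` to `dst`) or undirected (traversable both ways).
Parallel edges are allowed since `E` is an abstract edge-index type. -/
structure MixedMultigraph where
  V : Type
  E : Type
  [fintV : Fintype V]
  [fintE : Fintype E]
  src : E → V
  dst : E → V
  directed : E → Bool

attribute [instance] MixedMultigraph.fintV MixedMultigraph.fintE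

namespace MixedMultigraph

/-- A dart is a traversal of an edge; an edge may be traversed in reverse
(`rev = true`) only if it is undirected. -/
structure Dart (G : MixedMultigraph) where
  edge : G.E
  rev : Bool
  ok : rev = true → G.directed edge = false

/-- The starting vertex of a dart. -/
def Dart.fst {G : MixedMultigraph} (d : G.Dart) : G.V :=
  if d.rev then G.dst d.edge else G.src d.edge

/-- The ending vertex of a dart. -/
def Dart.snd {G : MixedMultigraph} (d : G.Dart) : G.V :=
  if d.rev then G.src d.edge else G.dst d.edge

/-- A walk from `u` to `v`: a sequence of darts, consecutive ones sharing endpoints. -/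
inductive Walk (G : MixedMultigraph) : G.V → G.V → Type
  | nil (u : G.V) : Walk G u u
  | cons {w : G.V} (d : G.Dart) (p : Walk G d.snd w) : Walk G d.fst w

namespace Walk

variable {G : MixedMultigraph}

/-- The number of edges of a walk. -/
def length {u v : G.V} : G.Walk u v → ℕ
  | .nil _ => 0
  | .cons _ p => p.length + 1

/-- The list of edges traversed by a walk. -/
def edges {u v : G.V} : G.Walk u v → List G.E
  | .nil _ => []
  | .cons d p => d.edge :: p.edges

/-- The list of darts of a walk. -/
def darts {u v : G.V} : G.Walk u v → List G.Dart
  | .nil _ => []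
  | .cons d p => d :: p.darts

/-- The list of vertices visited by a walk (in order, including both ends). -/
def support {u v : G.V} : G.Walk u v → List G.V
  | .nil u => [u]
  | .cons d p => d.fst :: p.support

/-- A path is a walk with no repeated vertices. -/
def IsPath {u v : G.V} (p : G.Walk u v) : Prop := p.support.Nodup

/-- A cycle is a nonempty closed walk with no repeated edges whose only
repeated vertex is its common first and last vertex. -/
def IsCycle {u : G.V} (p : G.Walk u u) : Prop :=
  0 < p.length ∧ p.edges.Nodup ∧ p.support.tail.Nodup

/-- Two vertices are consecutive on a walk if some dart of the walk joins them. -/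
def Consecutive {u v : G.V} (p : G.Walk u v) (x y : G.V) : Prop :=
  ∃ d ∈ p.darts, (d.fst = x ∧ d.snd = y) ∨ (d.fst = y ∧ d.snd = x)

/-- A chord of a cycle: an edge not on the cycle joining two distinct,
non-consecutive vertices of the cycle. -/
def IsChord {u : G.V} (p : G.Walk u u) (e : G.E) : Prop :=
  e ∉ p.edges ∧ G.src e ∈ p.support ∧ G.dst e ∈ p.support ∧
    G.src e ≠ G.dst e ∧ ¬ p.Consecutive (G.src e) (G.dst e)

end Walk

/-- The distance from `u` to `v`: the least length of a walk from `u` to `v`. -/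
noncomputable def dist (G : MixedMultigraph) (u v : G.V) : ℕ :=
  sInf {n | ∃ p : G.Walk u v, p.length = n}

/-- The eccentricity of a vertex `u`. -/
noncomputable def ecc (G : MixedMultigraph) (u : G.V) : ℕ :=
  sSup {n | ∃ v : G.V, n = max (G.dist u v) (G.dist v u)}

/-- The radius: the minimum eccentricity over all vertices. -/
noncomputable def radius (G : MixedMultigraph) : ℕ :=
  sInf {n | ∃ u : G.V, n = G.ecc u}

/-- The diameter: the maximum distance over all ordered pairs of vertices. -/
noncomputable def diam (G : MixedMultigraph) : ℕ :=
  sSup {n | ∃ u v : G.V, n = G.dist u v}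

/-- A mixed multigraph is strongly connected if there is a walk from every
vertex to every other vertex. -/
def StronglyConnected (G : MixedMultigraph) : Prop :=
  ∀ u v : G.V, Nonempty (G.Walk u v)

/-- The mixed multigraph obtained by deleting the edge `e₀`. -/
noncomputable def deleteEdge (G : MixedMultigraph) (e₀ : G.E) : MixedMultigraph :=
  letI := Classical.decEq G.E
  { V := G.V
    E := {e : G.E // e ≠ e₀}
    fintV := G.fintV
    fintE := inferInstance
    src := fun e => G.src e.1
    dst := fun e => G.dst e.1
    directed := fun e => G.directed e.1 }

/-- A mixed multigraph is bridgeless if it has no bridge. A bridge is an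
undirected edge whose removal destroys strong connectivity. -/
def Bridgeless (G : MixedMultigraph) : Prop :=
  ∀ e : G.E, G.directed e = false → (G.deleteEdge e).StronglyConnected

/-- An orientation: each undirected edge is assigned exactly one of its two
directions (`flip e = true` reverses the stored endpoints); directed edges stay. -/
structure Orientation (G : MixedMultigraph) where
  flip : G.E → Bool
  flip_dir : ∀ e : G.E, G.directed e = true → flip e = false

/-- The digraph resulting from an orientation. -/
def Orientation.graph {G : MixedMultigraph} (o : G.Orientation) : MixedMultigraph :=
  { V := G.V
    E := G.E
    fintV := G.fintV
    fintE := G.fintE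
    src := fun e => if o.flip e then G.dst e else G.src e
    dst := fun e => if o.flip e then G.src e else G.dst e
    directed := fun _ => true }

/-- Edge `e` lies on a cycle of length at most `L`. -/
def EdgeOnCycleLE (G : MixedMultigraph) (e : G.E) (L : ℕ) : Prop :=
  ∃ (u : G.V) (p : G.Walk u u), p.IsCycle ∧ e ∈ p.edges ∧ p.length ≤ L

/-- A mixed multigraph is `k`-chordal if every cycle of length more than `k`
has a chord. -/
def KChordal (G : MixedMultigraph) (k : ℕ) : Prop :=
  ∀ (u : G.V) (p : G.Walk u u), p.IsCycle → k < p.length → ∃ e : G.E, p.IsChord e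

/-- The closed neighbourhood `N[u]`: `u` together with all its in-neighbours,
out-neighbours and undirected neighbours. -/
def closedNbhd (G : MixedMultigraph) (u : G.V) : Set G.V :=
  {u} ∪ {v | ∃ e : G.E, (G.src e = u ∧ G.dst e = v) ∨ (G.src e = v ∧ G.dst e = u)}

/-- A subgraph: a subset of the vertices together with a subset of the edges
having both endpoints in that vertex subset. -/
structure Subgraph (G : MixedMultigraph) where
  verts : Finset G.V
  edges : Finset G.E
  src_mem : ∀ e ∈ edges, G.src e ∈ verts
  dst_mem : ∀ e ∈ edges, G.dst e ∈ verts

/-- A subgraph viewed as a mixed multigraph in its own right. -/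
def Subgraph.toGraph {G : MixedMultigraph} (H : G.Subgraph) : MixedMultigraph :=
  { V := {v : G.V // v ∈ H.verts}
    E := {e : G.E // e ∈ H.edges}
    fintV := FinsetCoe.fintype _
    fintE := FinsetCoe.fintype _
    src := fun e => ⟨G.src e.1, H.src_mem e.1 e.2⟩
    dst := fun e => ⟨G.dst e.1, H.dst_mem e.1 e.2⟩
    directed := fun e => G.directed e.1 }

end MixedMultigraph

/-!
The graph is built from hubs: a digraph `R` with a new vertex joined by undirected spokes to some
vertices of `R`, with copies of a smaller rooted graph hanging from the far ends of the spokes.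
The hub is within one step of every spoke end, but in an orientation the digraph has to be
traversed to reach the copies whose spoke is directed towards the hub.

Taking for `R` a path on `2m + 2` vertices with a spoke at either end raises the eccentricity of
the root from `m` to `m + 1`, while a strong orientation must use one spoke as the exit and the
other one as the entrance, which adds `2m + 2` to the oriented eccentricity. Iterating from a
single vertex gives a root of eccentricity `m` whose oriented eccentricity is
`2 + 4 + ⋯ + 2m = m² + m`, both for distances from and for distances to the root.

At the last stage `R` consists of three paths on `2m + 1` vertices joined cyclically by one-way
arcs, with a spoke at the middle of each. A strong orientation has only one exit or only one
entrance, and then some copy is `4m + 3` steps away from or towards the hub, in total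
`4m + 3 + m² + m = (m + 1)² + 3 (m + 1) - 1`. Finally two copies of this graph are glued at the
root, so that every vertex is at least as far away as the root from one of the two copies, and the
radius is the eccentricity of the root.
-/

namespace MixedMultigraph

section Relation

variable {V U : Type*} {R : V → V → Prop} {S : U → U → Prop} {u v w : V} {m n : ℕ}

/-- `ReachWithin R n u v` says that at most `n` steps of the relation `R` lead from `u` to `v`. -/
inductive ReachWithin (R : V → V → Prop) : ℕ → V → V → Prop
  | refl (n : ℕ) (u : V) : ReachWithin R n u u
  | head {n : ℕ} {u v w : V} : R u v → ReachWithin R n v w → ReachWithin R (n + 1) u w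

namespace ReachWithin

theorem single (h : R u v) : ReachWithin R 1 u v := .head h (.refl 0 v)

theorem mono (h : ReachWithin R n u v) (hnm : n ≤ m) : ReachWithin R m u v := by
  induction h generalizing m with
  | refl n u => exact .refl m u
  | head huv _ ih =>
    obtain ⟨k, rfl⟩ : ∃ k, m = k + 1 := ⟨m - 1, by omega⟩
    exact .head huv (ih (by omega))

theorem trans (huv : ReachWithin R n u v) (hvw : ReachWithin R m v w) :
    ReachWithin R (n + m) u w := by
  induction huv with
  | refl n u => exact hvw.mono (by omega)
  | head h _ ih => exact (ReachWithin.head h (ih hvw)).mono (by omega)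

theorem map (f : V → U) (hf : ∀ ⦃u v⦄, R u v → Relation.ReflGen S (f u) (f v))
    (h : ReachWithin R n u v) : ReachWithin S n (f u) (f v) := by
  induction h with
  | refl n u => exact .refl n _
  | @head n u v w huv _ ih =>
    obtain hfuv | hS := (Relation.reflGen_iff _ _ _).1 (hf huv)
    · exact hfuv ▸ ih.mono n.le_succ
    · exact .head hS ih

theorem swap (h : ReachWithin R n u v) : ReachWithin (Function.swap R) n v u := by
  induction h with
  | refl n u => exact .refl n u
  | head huv _ ih => exact ih.trans (.single huv)

theorem le_add {φ : V → ℕ} (hφ : ∀ ⦃u v⦄, R u v → φ v ≤ φ u + 1) (h : ReachWithin R n u v) :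
    φ v ≤ φ u + n := by
  induction h with
  | refl n u => omega
  | head huv _ ih => have := hφ huv; omega

theorem of_descent {φ : V → ℕ} (hφ : ∀ v, v = u ∨ ∃ w, R w v ∧ φ w < φ v) (v : V) :
    ReachWithin R (φ v) u v := by
  induction hk : φ v using Nat.strong_induction_on generalizing v with
  | _ k ih =>
    obtain rfl | ⟨w, hwv, hlt⟩ := hφ v
    · exact .refl k v
    · exact ((ih (φ w) (by omega) w rfl).trans (.single hwv)).mono (by omega)

end ReachWithin

/-- Strong connectivity of a relation: every vertex reaches every other one. -/
def IsStrong (R : V → V → Prop) : Prop := ∀ u v, ∃ n, ReachWithin R n u v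

/-- The least number of `R`-steps from `u` to `v`; it is `0` if `v` cannot be reached. -/
noncomputable def relDist (R : V → V → Prop) (u v : V) : ℕ := sInf {n | ReachWithin R n u v}

/-- The vertices that reach and are reached from `c` within `n` steps. The two-way ball of
radius `n` is everything iff `R` is strong and `c` has eccentricity at most `n`. -/
def twoWayBall (R : V → V → Prop) (c : V) (n : ℕ) : Set V :=
  {v | ReachWithin R n c v ∧ ReachWithin R n v c}

theorem self_mem_twoWayBall (R : V → V → Prop) (c : V) (n : ℕ) : c ∈ twoWayBall R c n :=
  ⟨.refl n c, .refl n c⟩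

theorem twoWayBall_mono (hnm : n ≤ m) : twoWayBall R u n ⊆ twoWayBall R u m :=
  fun _ hv => ⟨hv.1.mono hnm, hv.2.mono hnm⟩

theorem IsStrong.of_twoWayBall {c : V} {r : V → ℕ} (h : ∀ v, v ∈ twoWayBall R c (r v)) :
    IsStrong R :=
  fun u v => ⟨_, (h u).2.trans (h v).1⟩

theorem relDist_le (h : ReachWithin R n u v) : relDist R u v ≤ n := Nat.sInf_le h

theorem IsStrong.reachWithin_relDist (hR : IsStrong R) (u v : V) :
    ReachWithin R (relDist R u v) u v :=
  Nat.sInf_mem (hR u v)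

theorem reachWithin_swap_iff : ReachWithin (Function.swap R) n u v ↔ ReachWithin R n v u :=
  ⟨.swap, .swap⟩

theorem IsStrong.swap (hR : IsStrong R) : IsStrong (Function.swap R) :=
  fun u v => (hR v u).imp fun _ => .swap

theorem relDist_swap (R : V → V → Prop) (u v : V) :
    relDist (Function.swap R) u v = relDist R v u := by
  simp only [relDist, reachWithin_swap_iff]

theorem relDist_self (R : V → V → Prop) (u : V) : relDist R u u = 0 :=
  Nat.le_zero.1 (relDist_le (.refl 0 u))

theorem IsStrong.relDist_pos (hR : IsStrong R) (huv : u ≠ v) : 0 < relDist R u v := by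
  refine Nat.pos_of_ne_zero fun h => huv ?_
  have hreach := hR.reachWithin_relDist u v
  rw [h] at hreach
  cases hreach
  rfl

theorem IsStrong.relDist_step_le (hR : IsStrong R) (u : V) (hvw : R v w) :
    relDist R u w ≤ relDist R u v + 1 :=
  relDist_le ((hR.reachWithin_relDist u v).trans (.single hvw))

theorem IsStrong.le_add_relDist (hR : IsStrong R) {φ : V → ℕ}
    (hφ : ∀ ⦃u v⦄, R u v → φ v ≤ φ u + 1) (u v : V) : φ v ≤ φ u + relDist R u v :=
  (hR.reachWithin_relDist u v).le_add hφ

theorem IsStrong.relDist_map_le (hR : IsStrong R) (f : V → U)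
    (hf : ∀ ⦃u v⦄, R u v → Relation.ReflGen S (f u) (f v)) (u v : V) :
    relDist S (f u) (f v) ≤ relDist R u v :=
  relDist_le ((hR.reachWithin_relDist u v).map f hf)

theorem IsStrong.map (hR : IsStrong R) {f : V → U} (hsurj : f.Surjective)
    (hf : ∀ ⦃u v⦄, R u v → Relation.ReflGen S (f u) (f v)) : IsStrong S := by
  intro a b
  obtain ⟨u, rfl⟩ := hsurj a
  obtain ⟨v, rfl⟩ := hsurj b
  exact (hR u v).imp fun _ h => h.map f hf

end Relation

section AttachRel

variable {V U J : Type*} {B : V → V → Prop} {t : J → V} {ρ : U} {Q : J → U → U → Prop}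

open Classical in
/-- The image of a vertex `u` of the `j`-th copy of `U` in the vertex set obtained from `V` by
hanging copies of `U` indexed by `J`; the root `ρ` of the `j`-th copy is identified with `t j`,
so that only the other vertices of the copy are new. -/
noncomputable def copyVert (t : J → V) (ρ : U) (j : J) (u : U) : V ⊕ J × {u : U // u ≠ ρ} :=
  if h : u = ρ then .inl (t j) else .inr (j, ⟨u, h⟩)

/-- The relation obtained from `B` by hanging the relation `Q j`, rooted at `ρ`, at the vertex
`t j` for every `j`. -/
inductive AttachRel (B : V → V → Prop) (t : J → V) (ρ : U) (Q : J → U → U → Prop) :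
    V ⊕ J × {u : U // u ≠ ρ} → V ⊕ J × {u : U // u ≠ ρ} → Prop
  | base {u v : V} : B u v → AttachRel B t ρ Q (.inl u) (.inl v)
  | copy (j : J) {u v : U} : Q j u v → AttachRel B t ρ Q (copyVert t ρ j u) (copyVert t ρ j v)

/-- The retraction onto the base collapsing every hanging copy to its root. -/
def toBase (t : J → V) (ρ : U) : V ⊕ J × {u : U // u ≠ ρ} → V :=
  Sum.elim id fun x => t x.1

open Classical in
/-- The retraction onto the `j`-th copy collapsing the base and all other copies to the root. -/
noncomputable def toCopy (ρ : U) (j : J) : V ⊕ J × {u : U // u ≠ ρ} → U :=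
  Sum.elim (fun _ => ρ) fun x => if x.1 = j then x.2 else ρ

@[simp]
theorem copyVert_root (t : J → V) (ρ : U) (j : J) : copyVert t ρ j ρ = .inl (t j) := by
  simp [copyVert]

theorem inr_eq_copyVert (t : J → V) (j : J) (u : {u : U // u ≠ ρ}) :
    .inr (j, u) = copyVert t ρ j u := by
  simp [copyVert, u.2]

@[simp]
theorem toBase_inl (t : J → V) (ρ : U) (v : V) : toBase t ρ (.inl v) = v := rfl

@[simp]
theorem toBase_copyVert (t : J → V) (ρ : U) (j : J) (u : U) :
    toBase t ρ (copyVert t ρ j u) = t j := by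
  unfold copyVert
  split <;> rfl

@[simp]
theorem toCopy_inl (ρ : U) (j : J) (v : V) : toCopy ρ j (.inl v) = ρ := rfl

@[simp]
theorem toCopy_copyVert_self (t : J → V) (ρ : U) (j : J) (u : U) :
    toCopy ρ j (copyVert t ρ j u) = u := by
  by_cases h : u = ρ <;> simp [copyVert, toCopy, h]

theorem toCopy_copyVert_of_ne {i j : J} (hij : i ≠ j) (t : J → V) (ρ : U) (u : U) :
    toCopy ρ j (copyVert t ρ i u) = ρ := by
  by_cases h : u = ρ <;> simp [copyVert, toCopy, h, hij]

theorem exists_toCopy_eq_root [Nontrivial J] (ρ : U) (x : V ⊕ J × {u : U // u ≠ ρ}) :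
    ∃ j, toCopy ρ j x = ρ := by
  obtain v | ⟨i, u⟩ := x
  · exact ⟨Classical.arbitrary J, rfl⟩
  · obtain ⟨j, hj⟩ := exists_ne i
    exact ⟨j, by simp [toCopy, hj.symm]⟩

theorem swap_attachRel (B : V → V → Prop) (t : J → V) (ρ : U) (Q : J → U → U → Prop) :
    Function.swap (AttachRel B t ρ Q) =
      AttachRel (Function.swap B) t ρ fun j => Function.swap (Q j) := by
  ext x y
  constructor
  · rintro (h | ⟨j, h⟩)
    exacts [.base h, .copy j h]
  · rintro (h | ⟨j, h⟩)
    exacts [.base h, .copy j h]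

theorem AttachRel.toBase_reflGen {x y : V ⊕ J × {u : U // u ≠ ρ}} (h : AttachRel B t ρ Q x y) :
    Relation.ReflGen B (toBase t ρ x) (toBase t ρ y) := by
  obtain h | ⟨j, h⟩ := h
  · exact .single h
  · simpa only [toBase_copyVert] using .refl

theorem AttachRel.toCopy_reflGen (j : J) {x y : V ⊕ J × {u : U // u ≠ ρ}}
    (h : AttachRel B t ρ Q x y) : Relation.ReflGen (Q j) (toCopy ρ j x) (toCopy ρ j y) := by
  obtain h | ⟨i, h⟩ := h
  · exact .refl
  · obtain rfl | hij := eq_or_ne i j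
    · simpa only [toCopy_copyVert_self] using .single h
    · simpa only [toCopy_copyVert_of_ne hij] using .refl

theorem IsStrong.of_attachRel_base (h : IsStrong (AttachRel B t ρ Q)) : IsStrong B :=
  h.map (fun v => ⟨.inl v, rfl⟩) fun _ _ => AttachRel.toBase_reflGen

theorem IsStrong.of_attachRel_copy (h : IsStrong (AttachRel B t ρ Q)) (j : J) : IsStrong (Q j) :=
  h.map (fun u => ⟨copyVert t ρ j u, by simp⟩) fun _ _ => AttachRel.toCopy_reflGen j

theorem ReachWithin.attachRel_base {n : ℕ} {u v : V} (h : ReachWithin B n u v) :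
    ReachWithin (AttachRel B t ρ Q) n (.inl u) (.inl v) :=
  h.map Sum.inl fun _ _ h => .single (.base h)

theorem ReachWithin.attachRel_copy {n : ℕ} {j : J} {u v : U} (h : ReachWithin (Q j) n u v) :
    ReachWithin (AttachRel B t ρ Q) n (copyVert t ρ j u) (copyVert t ρ j v) :=
  h.map (copyVert t ρ j) fun _ _ h => .single (.copy j h)

theorem copyVert_mem_twoWayBall {c : V} {d n : ℕ} {j : J} {u : U} (hj : t j ∈ twoWayBall B c d)
    (hu : u ∈ twoWayBall (Q j) ρ n) :
    copyVert t ρ j u ∈ twoWayBall (AttachRel B t ρ Q) (.inl c) (d + n) := by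
  have hcopy := hu.1.attachRel_copy (B := B) (t := t) (ρ := ρ)
  have hcopy' := hu.2.attachRel_copy (B := B) (t := t) (ρ := ρ)
  rw [copyVert_root] at hcopy hcopy'
  exact ⟨hj.1.attachRel_base.trans hcopy, (hcopy'.trans hj.2.attachRel_base).mono (by omega)⟩

theorem mem_twoWayBall_attachRel {c : V} {d m n : ℕ} (hbase : ∀ v, v ∈ twoWayBall B c n)
    (ht : ∀ j, t j ∈ twoWayBall B c d) (hcopy : ∀ j u, u ∈ twoWayBall (Q j) ρ m)
    (hdm : d + m ≤ n) (x : V ⊕ J × {u : U // u ≠ ρ}) :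
    x ∈ twoWayBall (AttachRel B t ρ Q) (.inl c) n := by
  obtain v | ⟨j, u⟩ := x
  · exact ⟨(hbase v).1.attachRel_base, (hbase v).2.attachRel_base⟩
  · rw [inr_eq_copyVert t]
    exact twoWayBall_mono hdm (copyVert_mem_twoWayBall (ht j) (hcopy j u))

theorem IsStrong.attachRel (hB : IsStrong B) (hQ : ∀ j, IsStrong (Q j)) :
    IsStrong (AttachRel B t ρ Q) := by
  have hbase : ∀ x, (∃ n, ReachWithin (AttachRel B t ρ Q) n x (.inl (toBase t ρ x))) ∧
      ∃ n, ReachWithin (AttachRel B t ρ Q) n (.inl (toBase t ρ x)) x := by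
    rintro (v | ⟨j, u⟩)
    · exact ⟨⟨0, .refl 0 _⟩, ⟨0, .refl 0 _⟩⟩
    · rw [inr_eq_copyVert t, toBase_copyVert, ← copyVert_root t ρ j]
      exact ⟨(hQ j u ρ).imp fun _ h => h.attachRel_copy, (hQ j ρ u).imp fun _ h => h.attachRel_copy⟩
  intro x y
  obtain ⟨k, hx⟩ := (hbase x).1
  obtain ⟨l, hxy⟩ := hB (toBase t ρ x) (toBase t ρ y)
  obtain ⟨m, hy⟩ := (hbase y).2
  exact ⟨_, (hx.trans hxy.attachRel_base).trans hy⟩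

theorem IsStrong.add_le_relDist_inl_copyVert (h : IsStrong (AttachRel B t ρ Q)) (c : V) (j : J)
    (u : U) : relDist B c (t j) + relDist (Q j) ρ u ≤
      relDist (AttachRel B t ρ Q) (.inl c) (copyVert t ρ j u) := by
  have hB := h.of_attachRel_base
  have hQ := h.of_attachRel_copy j
  -- Every step moves at most one of the two retractions.
  have hstep : ∀ ⦃x y⦄, AttachRel B t ρ Q x y →
      relDist B c (toBase t ρ y) + relDist (Q j) ρ (toCopy ρ j y) ≤
        relDist B c (toBase t ρ x) + relDist (Q j) ρ (toCopy ρ j x) + 1 := by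
    rintro _ _ (hB' | ⟨i, hQ'⟩)
    · simp only [toBase_inl, toCopy_inl]
      have := hB.relDist_step_le c hB'
      omega
    · obtain rfl | hij := eq_or_ne i j
      · simp only [toBase_copyVert, toCopy_copyVert_self]
        have := hQ.relDist_step_le ρ hQ'
        omega
      · simp only [toBase_copyVert, toCopy_copyVert_of_ne hij]
        omega
  simpa only [toBase_inl, toBase_copyVert, toCopy_inl, toCopy_copyVert_self, relDist_self,
    zero_add] using h.le_add_relDist hstep (.inl c) (copyVert t ρ j u)

theorem IsStrong.add_le_relDist_copyVert_inl (h : IsStrong (AttachRel B t ρ Q)) (c : V) (j : J)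
    (u : U) : relDist B (t j) c + relDist (Q j) u ρ ≤
      relDist (AttachRel B t ρ Q) (copyVert t ρ j u) (.inl c) := by
  have hswap := h.swap
  rw [swap_attachRel] at hswap
  simpa only [← swap_attachRel, relDist_swap] using hswap.add_le_relDist_inl_copyVert c j u

theorem IsStrong.relDist_toCopy_le (h : IsStrong (AttachRel B t ρ Q)) (j : J)
    (x y : V ⊕ J × {u : U // u ≠ ρ}) :
    relDist (Q j) (toCopy ρ j x) (toCopy ρ j y) ≤ relDist (AttachRel B t ρ Q) x y :=
  h.relDist_map_le (toCopy ρ j) (fun _ _ => AttachRel.toCopy_reflGen j) x y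

/-- With at least two copies, every vertex lies outside some copy, hence at least as far from
the vertices of that copy as its root. -/
theorem IsStrong.exists_le_relDist_attachRel [Nontrivial J] (h : IsStrong (AttachRel B t ρ Q))
    {n : ℕ} (hQ : ∀ j, ∃ u, n ≤ relDist (Q j) ρ u ∨ n ≤ relDist (Q j) u ρ)
    (x : V ⊕ J × {u : U // u ≠ ρ}) :
    ∃ y, n ≤ relDist (AttachRel B t ρ Q) x y ∨ n ≤ relDist (AttachRel B t ρ Q) y x := by
  obtain ⟨j, hj⟩ := exists_toCopy_eq_root ρ x
  obtain ⟨u, hu⟩ := hQ j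
  have hfrom := h.relDist_toCopy_le j x (copyVert t ρ j u)
  have hto := h.relDist_toCopy_le j (copyVert t ρ j u) x
  rw [hj, toCopy_copyVert_self] at hfrom hto
  exact ⟨copyVert t ρ j u, hu.imp hfrom.trans' hto.trans'⟩

end AttachRel


section Graph

variable {G : MixedMultigraph} {u v : G.V} {n : ℕ}

/-- Adjacency along the darts in `D`. Choosing `D` suitably gives adjacency in the whole graph,
in a graph with an edge deleted, and in an orientation, all on the vertex type of `G`. -/
def AdjVia (G : MixedMultigraph) (D : Set G.Dart) (u v : G.V) : Prop :=
  ∃ d ∈ D, d.fst = u ∧ d.snd = v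

/-- Adjacency in a mixed multigraph. -/
abbrev Adj (G : MixedMultigraph) : G.V → G.V → Prop := G.AdjVia Set.univ

/-- The darts that follow the direction an orientation assigns to their edge. -/
def Orientation.darts (o : G.Orientation) : Set G.Dart := {d | d.rev = o.flip d.edge}

/-- Adjacency along an orientation. -/
abbrev Orientation.Adj (o : G.Orientation) : G.V → G.V → Prop := G.AdjVia o.darts

theorem reachWithin_adj_iff : ReachWithin G.Adj n u v ↔ ∃ p : G.Walk u v, p.length ≤ n := by
  constructor
  · intro h
    induction h with
    | refl n u => exact ⟨.nil u, n.zero_le⟩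
    | head huv _ ih =>
      obtain ⟨d, -, rfl, rfl⟩ := huv
      obtain ⟨p, hp⟩ := ih
      exact ⟨.cons d p, Nat.succ_le_succ hp⟩
  · rintro ⟨p, hp⟩
    refine .mono ?_ hp
    clear hp
    induction p with
    | nil u => exact .refl 0 u
    | cons d p ih => exact .head ⟨d, trivial, rfl, rfl⟩ ih

theorem stronglyConnected_iff_isStrong : G.StronglyConnected ↔ IsStrong G.Adj := by
  simp only [IsStrong, reachWithin_adj_iff]
  refine forall₂_congr fun u v => ⟨?_, ?_⟩
  · rintro ⟨p⟩
    exact ⟨p.length, p, le_rfl⟩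
  · rintro ⟨_, p, _⟩
    exact ⟨p⟩

theorem dist_eq_relDist (hG : G.StronglyConnected) (u v : G.V) :
    G.dist u v = relDist G.Adj u v := by
  refine le_antisymm ?_ ?_
  · obtain ⟨p, hp⟩ := reachWithin_adj_iff.1
      ((stronglyConnected_iff_isStrong.1 hG).reachWithin_relDist u v)
    exact (Nat.sInf_le ⟨p, rfl⟩ : G.dist u v ≤ p.length).trans hp
  · obtain ⟨q⟩ := hG u v
    obtain ⟨p, hp⟩ := Nat.sInf_mem (s := {n | ∃ p : G.Walk u v, p.length = n}) ⟨_, q, rfl⟩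
    exact relDist_le (reachWithin_adj_iff.2 ⟨p, hp.le⟩)

theorem max_dist_le_ecc (G : MixedMultigraph) (u v : G.V) :
    max (G.dist u v) (G.dist v u) ≤ G.ecc u := by
  refine le_csSup (Set.Finite.bddAbove ?_) ⟨v, rfl⟩
  exact (Set.finite_range fun v => max (G.dist u v) (G.dist v u)).subset
    fun _ ⟨v, hv⟩ => ⟨v, hv.symm⟩

theorem radius_le_of_twoWayBall {c : G.V} (h : ∀ v, v ∈ twoWayBall G.Adj c n) :
    G.radius ≤ n := by
  have hG : G.StronglyConnected := stronglyConnected_iff_isStrong.2 (.of_twoWayBall h)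
  refine (Nat.sInf_le ⟨c, rfl⟩ : G.radius ≤ G.ecc c).trans (csSup_le ⟨_, c, rfl⟩ ?_)
  rintro _ ⟨v, rfl⟩
  simp only [dist_eq_relDist hG]
  exact max_le (relDist_le (h v).1) (relDist_le (h v).2)

theorem le_radius [Nonempty G.V] (hG : G.StronglyConnected)
    (h : ∀ u, ∃ v, n ≤ relDist G.Adj u v ∨ n ≤ relDist G.Adj v u) : n ≤ G.radius := by
  refine le_csInf ⟨_, Classical.arbitrary G.V, rfl⟩ ?_
  rintro _ ⟨u, rfl⟩
  obtain ⟨v, hv⟩ := h u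
  simp only [← dist_eq_relDist hG] at hv
  exact (le_max_iff.2 hv).trans (G.max_dist_le_ecc u v)

theorem adj_deleteEdge (G : MixedMultigraph) (e : G.E) :
    (G.deleteEdge e).Adj = G.AdjVia {d | d.edge ≠ e} := by
  ext u v
  exact ⟨fun ⟨d, _, hu, hv⟩ => ⟨⟨d.edge.1, d.rev, d.ok⟩, d.edge.2, hu, hv⟩,
    fun ⟨d, hd, hu, hv⟩ => ⟨⟨⟨d.edge, hd⟩, d.rev, d.ok⟩, trivial, hu, hv⟩⟩

theorem bridgeless_iff_isStrong : G.Bridgeless ↔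
    ∀ e, G.directed e = false → IsStrong (G.AdjVia {d | d.edge ≠ e}) := by
  simp only [Bridgeless, stronglyConnected_iff_isStrong, adj_deleteEdge]
  rfl

theorem Orientation.adj_graph (o : G.Orientation) : o.graph.Adj = o.Adj := by
  ext u v
  constructor
  · rintro ⟨⟨e, rev, ok⟩, -, rfl, rfl⟩
    obtain rfl : rev = false := by simpa [Orientation.graph] using ok
    exact ⟨⟨e, o.flip e, fun h => by simpa [h] using o.flip_dir e⟩, rfl, rfl, rfl⟩
  · rintro ⟨d, hd, rfl, rfl⟩
    refine ⟨⟨d.edge, false, nofun⟩, trivial, ?_, ?_⟩ <;>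
      simp only [Dart.fst, Dart.snd, Orientation.graph, hd.out] <;> rfl

theorem Orientation.stronglyConnected_graph_iff (o : G.Orientation) :
    o.graph.StronglyConnected ↔ IsStrong o.Adj := by
  rw [stronglyConnected_iff_isStrong, o.adj_graph]
  rfl

end Graph

section Attach

variable {B K : MixedMultigraph} {J : Type} [Fintype J] {t : J → B.V} {ρ : K.V}

open Classical in
/-- The graph obtained from `B` by gluing, for every `j`, a copy of `K` along its root `ρ` to the
vertex `t j` of `B`. -/
noncomputable abbrev attach (B K : MixedMultigraph) (t : J → B.V) (ρ : K.V) :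
    MixedMultigraph where
  V := B.V ⊕ J × {v : K.V // v ≠ ρ}
  E := B.E ⊕ J × K.E
  src := Sum.elim (fun e => .inl (B.src e)) fun x => copyVert t ρ x.1 (K.src x.2)
  dst := Sum.elim (fun e => .inl (B.dst e)) fun x => copyVert t ρ x.1 (K.dst x.2)
  directed := Sum.elim B.directed fun x => K.directed x.2

/-- A dart of the base as a dart of the attached graph. -/
def baseDart (t : J → B.V) (ρ : K.V) (d : B.Dart) : (attach B K t ρ).Dart :=
  ⟨.inl d.edge, d.rev, d.ok⟩

/-- A dart of `K` as a dart of the `j`-th copy of `K` in the attached graph. -/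
def copyDart (t : J → B.V) (ρ : K.V) (j : J) (d : K.Dart) : (attach B K t ρ).Dart :=
  ⟨.inr (j, d.edge), d.rev, d.ok⟩

theorem fst_baseDart (t : J → B.V) (ρ : K.V) (d : B.Dart) :
    (baseDart t ρ d).fst = .inl d.fst :=
  (apply_ite Sum.inl _ _ _).symm

theorem snd_baseDart (t : J → B.V) (ρ : K.V) (d : B.Dart) :
    (baseDart t ρ d).snd = .inl d.snd :=
  (apply_ite Sum.inl _ _ _).symm

theorem fst_copyDart (t : J → B.V) (ρ : K.V) (j : J) (d : K.Dart) :
    (copyDart t ρ j d).fst = copyVert t ρ j d.fst :=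
  (apply_ite (copyVert t ρ j) _ _ _).symm

theorem snd_copyDart (t : J → B.V) (ρ : K.V) (j : J) (d : K.Dart) :
    (copyDart t ρ j d).snd = copyVert t ρ j d.snd :=
  (apply_ite (copyVert t ρ j) _ _ _).symm

theorem adjVia_attach (D : Set (attach B K t ρ).Dart) :
    (attach B K t ρ).AdjVia D = AttachRel (B.AdjVia (baseDart t ρ ⁻¹' D)) t ρ
      fun j => K.AdjVia (copyDart t ρ j ⁻¹' D) := by
  ext x y
  constructor
  · rintro ⟨⟨e | ⟨j, e⟩, rev, ok⟩, hd, rfl, rfl⟩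
    · let d : B.Dart := ⟨e, rev, ok⟩
      change AttachRel _ _ _ _ (baseDart t ρ d).fst (baseDart t ρ d).snd
      rw [fst_baseDart, snd_baseDart]
      exact .base ⟨d, hd, rfl, rfl⟩
    · let d : K.Dart := ⟨e, rev, ok⟩
      change AttachRel _ _ _ _ (copyDart t ρ j d).fst (copyDart t ρ j d).snd
      rw [fst_copyDart, snd_copyDart]
      exact .copy j ⟨d, hd, rfl, rfl⟩
  · rintro (⟨d, hd, rfl, rfl⟩ | ⟨j, d, hd, rfl, rfl⟩)
    · exact ⟨baseDart t ρ d, hd, fst_baseDart t ρ d, snd_baseDart t ρ d⟩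
    · exact ⟨copyDart t ρ j d, hd, fst_copyDart t ρ j d, snd_copyDart t ρ j d⟩

theorem adj_attach (B K : MixedMultigraph) (t : J → B.V) (ρ : K.V) :
    (attach B K t ρ).Adj = AttachRel B.Adj t ρ fun _ => K.Adj :=
  adjVia_attach Set.univ

theorem Bridgeless.attach (hB : B.Bridgeless) (hK : K.Bridgeless) (hB' : IsStrong B.Adj)
    (hK' : IsStrong K.Adj) : (attach B K t ρ).Bridgeless := by
  rw [bridgeless_iff_isStrong] at hB hK ⊢
  rintro (e | ⟨i, e⟩) he <;> rw [adjVia_attach]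
  · have hbase : baseDart t ρ ⁻¹' {d | d.edge ≠ .inl e} = {d | d.edge ≠ e} := by
      ext d; simp [baseDart]
    have hcopy (j : J) : copyDart t ρ j ⁻¹' {d | d.edge ≠ .inl e} = Set.univ := by
      ext d; simp [copyDart]
    simpa only [hbase, hcopy] using (hB e he).attachRel fun _ => hK'
  · have hbase : baseDart t ρ ⁻¹' {d | d.edge ≠ .inr (i, e)} = Set.univ := by
      ext d; simp [baseDart]
    rw [hbase]
    refine hB'.attachRel fun j => ?_
    obtain rfl | hji := eq_or_ne j i
    · have hcopy : copyDart t ρ j ⁻¹' {d | d.edge ≠ .inr (j, e)} = {d | d.edge ≠ e} := by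
        ext d; simp [copyDart]
      simpa only [hcopy] using hK e he
    · have hcopy : copyDart t ρ j ⁻¹' {d | d.edge ≠ .inr (i, e)} = Set.univ := by
        ext d; simp [copyDart, hji]
      simpa only [hcopy] using hK'

namespace Orientation

/-- The restriction of an orientation of the attached graph to the base. -/
def restrictBase (o : (attach B K t ρ).Orientation) : B.Orientation :=
  ⟨fun e => o.flip (.inl e), fun e => o.flip_dir (.inl e)⟩

/-- The restriction of an orientation of the attached graph to the `j`-th copy. -/
def restrictCopy (o : (attach B K t ρ).Orientation) (j : J) : K.Orientation :=
  ⟨fun e => o.flip (.inr (j, e)), fun e => o.flip_dir (.inr (j, e))⟩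

/-- The orientation of the attached graph using `oK` in every copy. -/
def glue (oB : B.Orientation) (oK : K.Orientation) (t : J → B.V) (ρ : K.V) :
    (attach B K t ρ).Orientation :=
  ⟨Sum.elim oB.flip fun x => oK.flip x.2, fun e => e.rec oB.flip_dir fun x => oK.flip_dir x.2⟩

theorem adj_attach (o : (attach B K t ρ).Orientation) :
    o.Adj = AttachRel o.restrictBase.Adj t ρ fun j => (o.restrictCopy j).Adj :=
  adjVia_attach o.darts

theorem adj_glue (oB : B.Orientation) (oK : K.Orientation) (t : J → B.V) (ρ : K.V) :
    (oB.glue oK t ρ).Adj = AttachRel oB.Adj t ρ fun _ => oK.Adj :=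
  adj_attach (oB.glue oK t ρ)

end Orientation

end Attach

section HubRel

variable {W J : Type*} {R : W → W → Prop} {t : J → W} {out inn : Set J} {j : J}

/-- The relation `R` together with a new vertex `none`, the hub, joined to the vertices `t j` by
spokes: those in `out` can be used away from the hub, those in `inn` towards the hub. -/
inductive HubRel (R : W → W → Prop) (t : J → W) (out inn : Set J) : Option W → Option W → Prop
  | out {j : J} : j ∈ out → HubRel R t out inn none (some (t j))
  | inn {j : J} : j ∈ inn → HubRel R t out inn (some (t j)) none
  | arc {u v : W} : R u v → HubRel R t out inn (some u) (some v)

theorem swap_hubRel (R : W → W → Prop) (t : J → W) (out inn : Set J) :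
    Function.swap (HubRel R t out inn) = HubRel (Function.swap R) t inn out := by
  ext x y
  constructor
  · rintro (h | h | h)
    exacts [.inn h, .out h, .arc h]
  · rintro (h | h | h)
    exacts [.inn h, .out h, .arc h]

theorem ReachWithin.hubRel {n : ℕ} {u v : W} (h : ReachWithin R n u v) :
    ReachWithin (HubRel R t out inn) n (some u) (some v) :=
  h.map some fun _ _ h => .single (.arc h)

theorem IsStrong.hubRel (hR : IsStrong R) (hout : out.Nonempty) (hinn : inn.Nonempty) :
    IsStrong (HubRel R t out inn) := by
  obtain ⟨a, ha⟩ := hout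
  obtain ⟨b, hb⟩ := hinn
  have hfrom : ∀ x, ∃ n, ReachWithin (HubRel R t out inn) n none x
    | none => ⟨0, .refl 0 none⟩
    | some w => (hR (t a) w).elim fun n h => ⟨n + 1, .head (.out ha) h.hubRel⟩
  have hto : ∀ x, ∃ n, ReachWithin (HubRel R t out inn) n x none
    | none => ⟨0, .refl 0 none⟩
    | some w => (hR w (t b)).elim fun n h => ⟨n + 1, h.hubRel.trans (.single (.inn hb))⟩
  intro x y
  obtain ⟨m, hx⟩ := hto x
  obtain ⟨n, hy⟩ := hfrom y
  exact ⟨m + n, hx.trans hy⟩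

theorem IsStrong.hubRel_out_nonempty [Nonempty W] (h : IsStrong (HubRel R t out inn)) :
    out.Nonempty := by
  obtain ⟨n, h⟩ := h none (some (Classical.arbitrary W))
  obtain - | ⟨h, -⟩ := h
  cases h with
  | out hj => exact ⟨_, hj⟩

theorem IsStrong.hubRel_inn_nonempty [Nonempty W] (h : IsStrong (HubRel R t out inn)) :
    inn.Nonempty := by
  have hswap := h.swap
  rw [swap_hubRel] at hswap
  exact hswap.hubRel_out_nonempty

theorem IsStrong.relDist_add_one_le_relDist_none_some (hR : IsStrong R)
    (h : IsStrong (HubRel R t out inn)) (hout : out ⊆ {j}) (w : W) :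
    relDist R (t j) w + 1 ≤ relDist (HubRel R t out inn) none (some w) := by
  let φ : Option W → ℕ := fun x => x.elim 0 fun w => relDist R (t j) w + 1
  have hφ : ∀ ⦃x y⦄, HubRel R t out inn x y → φ y ≤ φ x + 1 := by
    rintro _ _ (hi | - | h)
    · simp [φ, Set.mem_singleton_iff.1 (hout hi), relDist_self]
    · exact Nat.zero_le _
    · exact Nat.succ_le_succ (hR.relDist_step_le (t j) h)
  simpa [φ] using h.le_add_relDist hφ none (some w)

theorem IsStrong.relDist_add_one_le_relDist_some_none (hR : IsStrong R)
    (h : IsStrong (HubRel R t out inn)) (hinn : inn ⊆ {j}) (w : W) :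
    relDist R w (t j) + 1 ≤ relDist (HubRel R t out inn) (some w) none := by
  have hswap := h.swap
  rw [swap_hubRel] at hswap
  simpa only [← swap_hubRel, relDist_swap] using
    hR.swap.relDist_add_one_le_relDist_none_some hswap hinn w

theorem some_mem_twoWayBall_hubRel (hR : IsStrong R) {a b : J} (ha : a ∈ out) (hb : b ∈ inn)
    {D n : ℕ} (hD : relDist R (t a) (t j) < D) (hD' : relDist R (t j) (t b) < D) {w : W}
    (hw : w ∈ twoWayBall R (t j) n) :
    some w ∈ twoWayBall (HubRel R t out inn) none (D + n) := by
  have hfrom := ((hR.reachWithin_relDist (t a) (t j)).trans hw.1).hubRel (out := out) (inn := inn)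
    (t := t)
  have hto := (hw.2.trans (hR.reachWithin_relDist (t j) (t b))).hubRel (out := out) (inn := inn)
    (t := t)
  exact ⟨(ReachWithin.head (.out ha) hfrom).mono (by omega),
    (hto.trans (.single (.inn hb))).mono (by omega)⟩

end HubRel

section Hub

variable {W J : Type} [Fintype W] [Fintype J] {R : W → W → Prop} {t : J → W}

open Classical in
/-- The mixed multigraph with a hub `none` joined by undirected spokes to the vertices `t j`,
and with one directed edge for every pair of vertices related by `R`. A symmetric relation thus
contributes pairs of opposite directed edges. -/
noncomputable abbrev hub (R : W → W → Prop) (t : J → W) : MixedMultigraph where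
  V := Option W
  E := J ⊕ {p : W × W // R p.1 p.2}
  src := Sum.elim (fun _ => none) fun p => some p.1.1
  dst := Sum.elim (fun j => some (t j)) fun p => some p.1.2
  directed := Sum.elim (fun _ => false) fun _ => true

theorem adjVia_hub {D : Set (hub R t).Dart} {out inn : Set J}
    (hout : ∀ j, ⟨.inl j, false, fun _ => rfl⟩ ∈ D ↔ j ∈ out)
    (hinn : ∀ j, ⟨.inl j, true, fun _ => rfl⟩ ∈ D ↔ j ∈ inn)
    (harc : ∀ p, ⟨.inr p, false, nofun⟩ ∈ D) :
    (hub R t).AdjVia D = HubRel R t out inn := by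
  ext x y
  constructor
  · rintro ⟨⟨j | p, _ | _, ok⟩, hd, rfl, rfl⟩
    · exact .out ((hout j).1 hd)
    · exact .inn ((hinn j).1 hd)
    · exact .arc p.2
    · simp at ok
  · rintro (hj | hj | h)
    · exact ⟨_, (hout _).2 hj, rfl, rfl⟩
    · exact ⟨_, (hinn _).2 hj, rfl, rfl⟩
    · exact ⟨_, harc ⟨(_, _), h⟩, rfl, rfl⟩

theorem adj_hub (R : W → W → Prop) (t : J → W) :
    (hub R t).Adj = HubRel R t Set.univ Set.univ :=
  adjVia_hub (fun _ => Iff.rfl) (fun _ => Iff.rfl) fun _ => trivial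

theorem bridgeless_hub [Nontrivial J] (hR : IsStrong R) (t : J → W) : (hub R t).Bridgeless := by
  rw [bridgeless_iff_isStrong]
  rintro (i | p) he
  · have hadj : (hub R t).AdjVia {d | d.edge ≠ .inl i} = HubRel R t {i}ᶜ {i}ᶜ :=
      adjVia_hub (by simp) (by simp) (by simp)
    rw [hadj]
    exact hR.hubRel (exists_ne i) (exists_ne i)
  · simp at he

namespace Orientation

/-- The spokes of a hub oriented away from the hub. -/
def outSpokes (o : (hub R t).Orientation) : Set J := {j | o.flip (.inl j) = false}

theorem adj_hub (o : (hub R t).Orientation) : o.Adj = HubRel R t o.outSpokes o.outSpokesᶜ :=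
  adjVia_hub (fun _ => eq_comm) (fun _ => eq_comm.trans (Iff.of_eq (Bool.not_eq_false _)).symm)
    fun p => (o.flip_dir (.inr p) rfl).symm

open Classical in
/-- The orientation of a hub in which precisely the spokes in `out` point away from the hub. -/
noncomputable def ofOutSpokes (R : W → W → Prop) (t : J → W) (out : Set J) :
    (hub R t).Orientation :=
  ⟨Sum.elim (fun j => decide (j ∉ out)) fun _ => false, fun e => e.rec nofun fun _ _ => rfl⟩

theorem adj_ofOutSpokes (R : W → W → Prop) (t : J → W) (out : Set J) :
    (ofOutSpokes R t out).Adj = HubRel R t out outᶜ := by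
  rw [adj_hub]
  congr! <;> simp [outSpokes, ofOutSpokes]

end Orientation

end Hub

section RootEcc

variable {K : MixedMultigraph} {ρ : K.V} {n N D : ℕ}

/-- A bridgeless mixed multigraph whose root `ρ` has eccentricity `n`, and for which some
orientation gives `ρ` eccentricity at most `N`. -/
structure HasRootEcc (G : MixedMultigraph) (ρ : G.V) (n N : ℕ) : Prop where
  mem_twoWayBall : ∀ v, v ∈ twoWayBall G.Adj ρ n
  exists_le_relDist : ∃ v, n ≤ relDist G.Adj ρ v
  bridgeless : G.Bridgeless
  exists_orientation : ∃ o : G.Orientation, ∀ v, v ∈ twoWayBall o.Adj ρ N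

theorem HasRootEcc.isStrong (hK : K.HasRootEcc ρ n N) : IsStrong K.Adj :=
  .of_twoWayBall hK.mem_twoWayBall

variable {W J : Type} [Fintype W] [Fintype J] {R : W → W → Prop} {t : J → W}

/-- The hub over `R` with a copy of `K` hanging from the far end of every spoke. -/
noncomputable abbrev hubAttach (R : W → W → Prop) (t : J → W) (K : MixedMultigraph) (ρ : K.V) :
    MixedMultigraph :=
  attach (hub R t) K (fun j => some (t j)) ρ

theorem HasRootEcc.mem_twoWayBall_hubAttach (hK : K.HasRootEcc ρ n N) (hR : IsStrong R)
    (hball : ∀ w, ∃ j, w ∈ twoWayBall R (t j) n) (x : (hubAttach R t K ρ).V) :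
    x ∈ twoWayBall (hubAttach R t K ρ).Adj (.inl none) (n + 1) := by
  have hsome (j : J) {k : ℕ} {w : W} (hw : w ∈ twoWayBall R (t j) k) :
      some w ∈ twoWayBall (hub R t).Adj none (1 + k) := by
    rw [adj_hub]
    exact some_mem_twoWayBall_hubRel hR (Set.mem_univ j) (Set.mem_univ j) (by simp [relDist_self])
      (by simp [relDist_self]) hw
  rw [adj_attach]
  refine mem_twoWayBall_attachRel (d := 1) (m := n) ?_
    (fun j => hsome j (self_mem_twoWayBall R (t j) 0)) (fun _ => hK.mem_twoWayBall) (by omega) x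
  rintro (_ | w)
  · exact self_mem_twoWayBall _ _ _
  · obtain ⟨j, hw⟩ := hball w
    exact twoWayBall_mono (by omega) (hsome j hw)

theorem HasRootEcc.exists_orientation_hubAttach (hK : K.HasRootEcc ρ n N) (hnN : n ≤ N)
    (hR : IsStrong R) (hball : ∀ w, ∃ j, w ∈ twoWayBall R (t j) n) {a b : J} (hab : a ≠ b)
    (hD : ∀ j, relDist R (t a) (t j) < D ∧ relDist R (t j) (t b) < D) :
    ∃ o : (hubAttach R t K ρ).Orientation, ∀ x, x ∈ twoWayBall o.Adj (.inl none) (D + N) := by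
  obtain ⟨o, ho⟩ := hK.exists_orientation
  refine ⟨(Orientation.ofOutSpokes R t {a}).glue o _ ρ, fun x => ?_⟩
  rw [Orientation.adj_glue, Orientation.adj_ofOutSpokes]
  have hsome (j : J) {k : ℕ} {w : W} (hw : w ∈ twoWayBall R (t j) k) :
      some w ∈ twoWayBall (HubRel R t {a} {a}ᶜ) none (D + k) :=
    some_mem_twoWayBall_hubRel hR (Set.mem_singleton a) hab.symm (hD j).1 (hD j).2 hw
  refine mem_twoWayBall_attachRel (d := D) (m := N) ?_
    (fun j => hsome j (self_mem_twoWayBall R (t j) 0)) (fun _ => ho) le_rfl x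
  rintro (_ | w)
  · exact self_mem_twoWayBall _ _ _
  · obtain ⟨j, hw⟩ := hball w
    exact twoWayBall_mono (by omega) (hsome j hw)

theorem HasRootEcc.hubAttach (hK : K.HasRootEcc ρ n N) (hnN : n ≤ N) (hR : IsStrong R)
    (hball : ∀ w, ∃ j, w ∈ twoWayBall R (t j) n) {a b : J} (hab : a ≠ b)
    (hD : ∀ j, relDist R (t a) (t j) < D ∧ relDist R (t j) (t b) < D) :
    (hubAttach R t K ρ).HasRootEcc (.inl none) (n + 1) (D + N) where
  mem_twoWayBall := hK.mem_twoWayBall_hubAttach hR hball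
  exists_le_relDist := by
    have hstrong := IsStrong.of_twoWayBall (hK.mem_twoWayBall_hubAttach hR hball)
    obtain ⟨v, hv⟩ := hK.exists_le_relDist
    rw [adj_attach] at hstrong ⊢
    have hfar := hstrong.add_le_relDist_inl_copyVert none a v
    have hspoke := hstrong.of_attachRel_base.relDist_pos (Option.some_ne_none (t a)).symm
    exact ⟨_, le_trans (by omega) hfar⟩
  bridgeless := by
    have : Nontrivial J := ⟨a, b, hab⟩
    have hhub : IsStrong (hub R t).Adj := by
      rw [adj_hub]
      exact hR.hubRel ⟨a, trivial⟩ ⟨a, trivial⟩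
    exact (bridgeless_hub hR t).attach hK.bridgeless hhub hK.isStrong
  exists_orientation := hK.exists_orientation_hubAttach hnN hR hball hab hD

/-- In every strong orientation, some vertex is at distance at least `N` from the root and the
root is at distance at least `N` from some vertex. -/
def ForcesRootDist (G : MixedMultigraph) (ρ : G.V) (N : ℕ) : Prop :=
  ∀ o : G.Orientation, IsStrong o.Adj →
    (∃ v, N ≤ relDist o.Adj ρ v) ∧ ∃ v, N ≤ relDist o.Adj v ρ

theorem ForcesRootDist.exists_le_relDist_root (hK : K.ForcesRootDist ρ N) (hR : IsStrong R)
    {o : (hubAttach R t K ρ).Orientation} (ho : IsStrong o.Adj) {i : J}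
    (hi : o.restrictBase.outSpokes ⊆ {i}) (j : J) :
    ∃ x, relDist R (t i) (t j) + 1 + N ≤ relDist o.Adj (.inl none) x := by
  rw [o.adj_attach, o.restrictBase.adj_hub] at ho ⊢
  obtain ⟨v, hv⟩ := (hK _ (ho.of_attachRel_copy j)).1
  have hspoke := hR.relDist_add_one_le_relDist_none_some ho.of_attachRel_base hi (t j)
  exact ⟨_, (add_le_add hspoke hv).trans (ho.add_le_relDist_inl_copyVert none j v)⟩

theorem ForcesRootDist.exists_le_relDist_to_root (hK : K.ForcesRootDist ρ N) (hR : IsStrong R)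
    {o : (hubAttach R t K ρ).Orientation} (ho : IsStrong o.Adj) {i : J}
    (hi : o.restrictBase.outSpokesᶜ ⊆ {i}) (j : J) :
    ∃ x, relDist R (t j) (t i) + 1 + N ≤ relDist o.Adj x (.inl none) := by
  rw [o.adj_attach, o.restrictBase.adj_hub] at ho ⊢
  obtain ⟨v, hv⟩ := (hK _ (ho.of_attachRel_copy j)).2
  have hspoke := hR.relDist_add_one_le_relDist_some_none ho.of_attachRel_base hi (t j)
  exact ⟨_, (add_le_add hspoke hv).trans (ho.add_le_relDist_copyVert_inl none j v)⟩

theorem Orientation.outSpokes_nonempty_and_compl_nonempty [Nonempty W]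
    {o : (hubAttach R t K ρ).Orientation} (ho : IsStrong o.Adj) :
    o.restrictBase.outSpokes.Nonempty ∧ o.restrictBase.outSpokesᶜ.Nonempty := by
  rw [o.adj_attach, o.restrictBase.adj_hub] at ho
  exact ⟨ho.of_attachRel_base.hubRel_out_nonempty, ho.of_attachRel_base.hubRel_inn_nonempty⟩

end RootEcc

section Tower

open SimpleGraph

theorem reachWithin_pathGraph {k : ℕ} (i j : Fin k) :
    ReachWithin (pathGraph k).Adj (Nat.dist i j) i j := by
  refine .of_descent (φ := fun j : Fin k => Nat.dist i j) (fun j => ?_) j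
  simp only [Nat.dist, pathGraph_adj, Fin.ext_iff]
  obtain h | h | h := lt_trichotomy (j : ℕ) i
  · exact .inr ⟨⟨j + 1, by omega⟩, by dsimp only; omega⟩
  · exact .inl h
  · exact .inr ⟨⟨j - 1, by omega⟩, by dsimp only; omega⟩

theorem isStrong_pathGraph (k : ℕ) : IsStrong (pathGraph k).Adj :=
  fun i j => ⟨_, reachWithin_pathGraph i j⟩

theorem relDist_pathGraph {k : ℕ} (i j : Fin k) :
    relDist (pathGraph k).Adj i j = Nat.dist i j := by
  refine le_antisymm (relDist_le (reachWithin_pathGraph i j)) ?_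
  have hstep : ∀ ⦃u v : Fin k⦄, (pathGraph k).Adj u v → Nat.dist i v ≤ Nat.dist i u + 1 := by
    intro u v huv
    rw [pathGraph_adj] at huv
    simp only [Nat.dist]
    omega
  simpa only [Nat.dist_self, zero_add] using (isStrong_pathGraph k).le_add_relDist hstep i j

theorem mem_twoWayBall_pathGraph {k n : ℕ} {i j : Fin k} (h : Nat.dist i j ≤ n) :
    j ∈ twoWayBall (pathGraph k).Adj i n :=
  ⟨(reachWithin_pathGraph i j).mono h, (reachWithin_pathGraph j i).mono (Nat.dist_comm _ _ ▸ h)⟩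

/-- The two ends of the path on `n + 1` vertices. -/
def pathEnd (n : ℕ) (b : Bool) : Fin (n + 1) := bif b then Fin.last n else 0

theorem relDist_pathEnd_le (n : ℕ) (a b : Bool) :
    relDist (pathGraph (n + 1)).Adj (pathEnd n a) (pathEnd n b) ≤ n := by
  rw [relDist_pathGraph]
  simp only [Nat.dist]
  omega

theorem relDist_pathEnd_of_ne (n : ℕ) {a b : Bool} (hab : a ≠ b) :
    relDist (pathGraph (n + 1)).Adj (pathEnd n a) (pathEnd n b) = n := by
  rw [relDist_pathGraph]
  cases a <;> cases b <;> simp [pathEnd, Nat.dist] at hab ⊢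

theorem exists_pathEnd_mem_twoWayBall (m : ℕ) (i : Fin (2 * m + 2)) :
    ∃ b, i ∈ twoWayBall (pathGraph (2 * m + 2)).Adj (pathEnd (2 * m + 1) b) m := by
  obtain h | h := le_or_gt (i : ℕ) m
  · exact ⟨false, mem_twoWayBall_pathGraph (by simp [pathEnd, Nat.dist, h])⟩
  · exact ⟨true, mem_twoWayBall_pathGraph (by
    simp only [pathEnd, cond_true, Fin.val_last, Nat.dist]
    omega)⟩

/-- The next floor of the tower: a hub joined to both ends of a path on `2 * m + 2` vertices, with
the previous floor hanging from both ends. -/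
noncomputable abbrev pathHub (m : ℕ) (K : MixedMultigraph) (ρ : K.V) : MixedMultigraph :=
  hubAttach (pathGraph (2 * m + 2)).Adj (pathEnd (2 * m + 1)) K ρ

variable {K : MixedMultigraph} {ρ : K.V} {m N : ℕ}

theorem HasRootEcc.pathHub (hK : K.HasRootEcc ρ m N) (hmN : m ≤ N) :
    (pathHub m K ρ).HasRootEcc (.inl none) (m + 1) (2 * m + 2 + N) :=
  hK.hubAttach hmN (isStrong_pathGraph _) (exists_pathEnd_mem_twoWayBall m) Bool.false_ne_true
    fun _ => ⟨Nat.lt_succ_of_le (relDist_pathEnd_le _ _ _),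
      Nat.lt_succ_of_le (relDist_pathEnd_le _ _ _)⟩

theorem subset_singleton_of_mem_of_notMem {s : Set Bool} {a b : Bool} (ha : a ∈ s) (hb : b ∉ s) :
    s ⊆ {a} := by
  intro c hc
  have hcb : c ≠ b := fun h => hb (h ▸ hc)
  have hab : a ≠ b := fun h => hb (h ▸ ha)
  cases a <;> cases b <;> cases c <;> simp_all

/-- A strong orientation makes one spoke an exit and the other an entrance, so that the whole path
has to be traversed to reach, or to return from, one of the two hanging copies. -/
theorem ForcesRootDist.pathHub (hK : K.ForcesRootDist ρ N) :
    (pathHub m K ρ).ForcesRootDist (.inl none) (2 * m + 2 + N) := by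
  intro o ho
  obtain ⟨⟨a, ha⟩, ⟨b, hb⟩⟩ := Orientation.outSpokes_nonempty_and_compl_nonempty ho
  have hab : a ≠ b := fun h => hb (h ▸ ha)
  have hout := hK.exists_le_relDist_root (isStrong_pathGraph _) ho
    (subset_singleton_of_mem_of_notMem ha hb) b
  have hinn := hK.exists_le_relDist_to_root (isStrong_pathGraph _) ho
    (subset_singleton_of_mem_of_notMem hb (Set.notMem_compl_iff.2 ha)) a
  rw [relDist_pathEnd_of_ne _ hab] at hout hinn
  exact ⟨hout, hinn⟩

/-- The mixed multigraph with one vertex and no edges. -/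
abbrev point : MixedMultigraph := ⟨Unit, Empty, Empty.elim, Empty.elim, Empty.elim⟩

theorem mem_twoWayBall_point (R : Unit → Unit → Prop) (n : ℕ) (v : Unit) :
    v ∈ twoWayBall R () n :=
  self_mem_twoWayBall R () n

theorem hasRootEcc_point : point.HasRootEcc () 0 0 where
  mem_twoWayBall := mem_twoWayBall_point _ 0
  exists_le_relDist := ⟨(), Nat.zero_le _⟩
  bridgeless := nofun
  exists_orientation := ⟨⟨Empty.elim, nofun⟩, mem_twoWayBall_point _ 0⟩

theorem exists_hasRootEcc_forcesRootDist (n : ℕ) : ∃ (K : MixedMultigraph) (ρ : K.V),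
    K.HasRootEcc ρ n (n ^ 2 + n) ∧ K.ForcesRootDist ρ (n ^ 2 + n) := by
  induction n with
  | zero => exact ⟨point, (), hasRootEcc_point, fun _ _ => ⟨⟨(), Nat.zero_le _⟩, (), Nat.zero_le _⟩⟩
  | succ n ih =>
    obtain ⟨K, ρ, hecc, hforce⟩ := ih
    have hsum : (n + 1) ^ 2 + (n + 1) = 2 * n + 2 + (n ^ 2 + n) := by ring
    rw [hsum]
    exact ⟨pathHub n K ρ, .inl none, hecc.pathHub (Nat.le_add_left _ _), hforce.pathHub⟩

end Tower

section SegmentCycle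

open SimpleGraph

variable {m : ℕ}

/-- Three paths on `2 * m + 1` vertices, traversable both ways, joined cyclically by arcs from the
last vertex of each path to the first vertex of the next one. -/
inductive SegmentCycle (m : ℕ) : Fin 3 × Fin (2 * m + 1) → Fin 3 × Fin (2 * m + 1) → Prop
  | step (j : Fin 3) {u v : Fin (2 * m + 1)} :
      (pathGraph (2 * m + 1)).Adj u v → SegmentCycle m (j, u) (j, v)
  | cross (j : Fin 3) : SegmentCycle m (j, Fin.last (2 * m)) (j + 1, 0)

/-- The middle vertex of a segment. -/
def segmentMid (m : ℕ) (j : Fin 3) : Fin 3 × Fin (2 * m + 1) := (j, ⟨m, by omega⟩)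

theorem ReachWithin.segmentCycle {n : ℕ} {u v : Fin (2 * m + 1)} (j : Fin 3)
    (h : ReachWithin (pathGraph (2 * m + 1)).Adj n u v) :
    ReachWithin (SegmentCycle m) n (j, u) (j, v) :=
  h.map (Prod.mk j) fun _ _ h => .single (.step j h)

theorem mem_twoWayBall_segmentMid (x : Fin 3 × Fin (2 * m + 1)) :
    x ∈ twoWayBall (SegmentCycle m) (segmentMid m x.1) m := by
  have hx : x.2 ∈ twoWayBall (pathGraph (2 * m + 1)).Adj ⟨m, by omega⟩ m :=
    mem_twoWayBall_pathGraph (by simp only [Nat.dist]; omega)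
  exact ⟨hx.1.segmentCycle x.1, hx.2.segmentCycle x.1⟩

theorem reachWithin_segmentMid_add_one (j : Fin 3) :
    ReachWithin (SegmentCycle m) (2 * m + 1) (segmentMid m j) (segmentMid m (j + 1)) := by
  have hlast := (mem_twoWayBall_segmentMid (j, Fin.last (2 * m))).1
  have hfirst := (mem_twoWayBall_segmentMid (m := m) (j + 1, 0)).2
  exact (hlast.trans (.head (.cross j) hfirst)).mono (by omega)

theorem reachWithin_segmentMid (j k : Fin 3) :
    ReachWithin (SegmentCycle m) (4 * m + 2) (segmentMid m j) (segmentMid m k) := by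
  have hk : k = j ∨ k = j + 1 ∨ k = j + 1 + 1 := by decide +revert
  have hnext := reachWithin_segmentMid_add_one (m := m)
  obtain rfl | rfl | rfl := hk
  · exact .refl _ _
  · exact (hnext j).mono (by omega)
  · exact ((hnext j).trans (hnext (j + 1))).mono (by omega)

theorem isStrong_segmentCycle (m : ℕ) : IsStrong (SegmentCycle m) := fun x y =>
  ⟨_, ((mem_twoWayBall_segmentMid x).2.trans (reachWithin_segmentMid x.1 y.1)).trans
    (mem_twoWayBall_segmentMid y).1⟩

theorem le_relDist_segmentMid (a : Fin 3) :
    4 * m + 2 ≤ relDist (SegmentCycle m) (segmentMid m a) (segmentMid m (a + 2)) := by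
  -- The number of steps along the cycle from the middle of segment `a`, truncated to `0` on the
  -- first half of that segment.
  let φ : Fin 3 × Fin (2 * m + 1) → ℕ := fun x => (2 * m + 1) * (x.1 - a : Fin 3) + x.2 - m
  have hφ : ∀ ⦃x y⦄, SegmentCycle m x y → φ y ≤ φ x + 1 := by
    rintro _ _ (⟨j, huv⟩ | j)
    · rw [pathGraph_adj] at huv
      dsimp only [φ]
      omega
    · have hval : ∀ i k : Fin 3, ((i + 1 - k : Fin 3) : ℕ) ≤ (i - k : Fin 3) + 1 := by decide
      have := Nat.mul_le_mul_left (2 * m + 1) (hval j a)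
      simp only [φ, Fin.val_last, Fin.val_zero]
      rw [mul_add] at this
      omega
  have hmid := (isStrong_segmentCycle m).le_add_relDist hφ (segmentMid m a) (segmentMid m (a + 2))
  simp only [φ, segmentMid, sub_self, add_sub_cancel_left, Fin.val_zero, Fin.val_two] at hmid
  simp only [segmentMid]
  omega

theorem subsingleton_or_subsingleton_compl {α : Type*} [Finite α] (hα : Nat.card α ≤ 3)
    (s : Set α) : s.Subsingleton ∨ sᶜ.Subsingleton := by
  by_contra! h
  have hs := Set.one_lt_ncard_iff_nontrivial.2 h.1
  have hs' := Set.one_lt_ncard_iff_nontrivial.2 h.2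
  have := s.ncard_add_ncard_compl
  omega

/-- A hub joined to the middles of the three segments of a segment cycle, with a copy of `K`
hanging from each of them. -/
noncomputable abbrev cycleHub (m : ℕ) (K : MixedMultigraph) (ρ : K.V) : MixedMultigraph :=
  hubAttach (SegmentCycle m) (segmentMid m) K ρ

variable {K : MixedMultigraph} {ρ : K.V} {N : ℕ}

theorem HasRootEcc.cycleHub (hK : K.HasRootEcc ρ m N) (hmN : m ≤ N) :
    (cycleHub m K ρ).HasRootEcc (.inl none) (m + 1) (4 * m + 3 + N) :=
  hK.hubAttach hmN (isStrong_segmentCycle m) (fun x => ⟨x.1, mem_twoWayBall_segmentMid x⟩)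
    (zero_ne_one (α := Fin 3)) fun _ =>
    ⟨Nat.lt_succ_of_le (relDist_le (reachWithin_segmentMid _ _)),
      Nat.lt_succ_of_le (relDist_le (reachWithin_segmentMid _ _))⟩

/-- A strong orientation leaves a single exit or a single entrance among the three spokes, and the
arcs force a detour through all the segments to the copy just before that exit, or from the copy
just after that entrance. -/
theorem ForcesRootDist.cycleHub (hK : K.ForcesRootDist ρ N)
    {o : (cycleHub m K ρ).Orientation} (ho : IsStrong o.Adj) :
    ∃ x, 4 * m + 3 + N ≤ relDist o.Adj (.inl none) x ∨
      4 * m + 3 + N ≤ relDist o.Adj x (.inl none) := by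
  obtain ⟨⟨a, ha⟩, ⟨b, hb⟩⟩ := Orientation.outSpokes_nonempty_and_compl_nonempty ho
  obtain h | h := subsingleton_or_subsingleton_compl (by simp) o.restrictBase.outSpokes
  · obtain ⟨x, hx⟩ := hK.exists_le_relDist_root (isStrong_segmentCycle m) ho
      (h.eq_singleton_of_mem ha).subset (a + 2)
    have := le_relDist_segmentMid (m := m) a
    exact ⟨x, .inl (by omega)⟩
  · obtain ⟨x, hx⟩ := hK.exists_le_relDist_to_root (isStrong_segmentCycle m) ho
      (h.eq_singleton_of_mem hb).subset (b + 1)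
    have hcycle : ∀ i : Fin 3, i + 1 + 2 = i := by decide
    have := le_relDist_segmentMid (m := m) (b + 1)
    rw [hcycle] at this
    exact ⟨x, .inr (by omega)⟩

end SegmentCycle

section Double

variable {T : MixedMultigraph} {ρ : T.V} {n N : ℕ}

/-- Two copies of `T` glued along the root. -/
noncomputable abbrev double (T : MixedMultigraph) (ρ : T.V) : MixedMultigraph :=
  attach point T (fun _ : Bool => ()) ρ

theorem HasRootEcc.mem_twoWayBall_double (hT : T.HasRootEcc ρ n N) (x : (double T ρ).V) :
    x ∈ twoWayBall (double T ρ).Adj (.inl ()) n := by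
  rw [adj_attach]
  exact mem_twoWayBall_attachRel (mem_twoWayBall_point _ n) (fun _ => mem_twoWayBall_point _ 0 _)
    (fun _ => hT.mem_twoWayBall) (Nat.zero_add n).le x

theorem HasRootEcc.stronglyConnected_double (hT : T.HasRootEcc ρ n N) :
    (double T ρ).StronglyConnected :=
  stronglyConnected_iff_isStrong.2 (.of_twoWayBall hT.mem_twoWayBall_double)

theorem HasRootEcc.bridgeless_double (hT : T.HasRootEcc ρ n N) : (double T ρ).Bridgeless :=
  hasRootEcc_point.bridgeless.attach hT.bridgeless hasRootEcc_point.isStrong hT.isStrong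

theorem HasRootEcc.radius_double (hT : T.HasRootEcc ρ n N) : (double T ρ).radius = n := by
  refine le_antisymm (radius_le_of_twoWayBall hT.mem_twoWayBall_double) ?_
  have hstrong := stronglyConnected_iff_isStrong.1 hT.stronglyConnected_double
  refine le_radius hT.stronglyConnected_double ?_
  rw [adj_attach] at hstrong ⊢
  obtain ⟨v, hv⟩ := hT.exists_le_relDist
  exact hstrong.exists_le_relDist_attachRel fun _ => ⟨v, .inl hv⟩

theorem HasRootEcc.exists_orientation_double (hT : T.HasRootEcc ρ n N) :
    ∃ o : (double T ρ).Orientation, o.graph.StronglyConnected ∧ o.graph.radius ≤ N := by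
  obtain ⟨oP, -⟩ := hasRootEcc_point.exists_orientation
  obtain ⟨oT, hoT⟩ := hT.exists_orientation
  let o : (double T ρ).Orientation := oP.glue oT _ ρ
  have hball : ∀ x, x ∈ twoWayBall o.Adj (.inl ()) N := by
    rw [Orientation.adj_glue]
    exact mem_twoWayBall_attachRel (mem_twoWayBall_point _ N)
      (fun _ => mem_twoWayBall_point _ 0 _) (fun _ => hoT) (Nat.zero_add N).le
  rw [← o.adj_graph] at hball
  exact ⟨o, stronglyConnected_iff_isStrong.2 (.of_twoWayBall hball), radius_le_of_twoWayBall hball⟩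

theorem le_radius_double
    (hT : ∀ o : T.Orientation, IsStrong o.Adj →
      ∃ v, N ≤ relDist o.Adj ρ v ∨ N ≤ relDist o.Adj v ρ)
    {o : (double T ρ).Orientation} (ho : o.graph.StronglyConnected) : N ≤ o.graph.radius := by
  have hstrong := o.stronglyConnected_graph_iff.1 ho
  have : Nonempty o.graph.V := ⟨.inl ()⟩
  refine le_radius ho ?_
  rw [o.adj_graph]
  rw [o.adj_attach] at hstrong ⊢
  exact hstrong.exists_le_relDist_attachRel fun j => hT _ (hstrong.of_attachRel_copy j)

end Double

end MixedMultigraph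

open MixedMultigraph in
/-- for every `r ≥ 1` there is a strongly connected bridgeless
mixed multigraph of radius `r` whose oriented radius is exactly `r² + 3r − 1`. -/
theorem oriented_radius_exact (r : ℕ) (hr : 1 ≤ r) :
    ∃ G : MixedMultigraph, G.StronglyConnected ∧ G.Bridgeless ∧ G.radius = r ∧
      (∃ o : G.Orientation, o.graph.StronglyConnected ∧
        o.graph.radius = r ^ 2 + 3 * r - 1) ∧
      (∀ o : G.Orientation, o.graph.StronglyConnected →
        r ^ 2 + 3 * r - 1 ≤ o.graph.radius) := by
  obtain ⟨m, rfl⟩ : ∃ m, r = m + 1 := ⟨r - 1, by omega⟩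
  have hradius : (m + 1) ^ 2 + 3 * (m + 1) - 1 = 4 * m + 3 + (m ^ 2 + m) := by
    rw [Nat.sub_eq_iff_eq_add (by omega)]
    ring
  rw [hradius]
  obtain ⟨K, ρ, hecc, hforce⟩ := exists_hasRootEcc_forcesRootDist m
  have hT := hecc.cycleHub (Nat.le_add_left m (m ^ 2))
  have hlower {o : (double (cycleHub m K ρ) (.inl none)).Orientation}
      (ho : o.graph.StronglyConnected) : 4 * m + 3 + (m ^ 2 + m) ≤ o.graph.radius :=
    le_radius_double (fun _ => hforce.cycleHub) ho
  obtain ⟨o, ho, hupper⟩ := hT.exists_orientation_double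
  exact ⟨double (cycleHub m K ρ) (.inl none), hT.stronglyConnected_double, hT.bridgeless_double,
    hT.radius_double, ⟨o, ho, hupper.antisymm (hlower ho)⟩, fun _ => hlower⟩
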